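/- Fix p ∈ (0,1), let h = −p log p − q log q (logs base 2), and let 0 < a < b < 1/h and ε > 0. Then there exist constants C > 0 and δ > 0 such that for all n ≥ 2, uniformly over all integers k with a log n ≤ k ≤ b log n: P( |log W_k − log n + k h| > ε log n ) ≤ C n^{−δ}, where W_k is the number of indices i ∈ {1,…,n} such that ξ_i agrees with ξ_1 in its first k bits. -/

import Mathlib

/-!
Partial fillup in tries (Janson–Szpankowski), Theorem 1 (two-point concentration
of the α-fillup level `F_n(α)`).

Model: an outcome `ω : ℕ → ℕ → Bool` encodes infinitely many strings, where
`ω i j` is the `j`-th bit of the `i`-th string; the measure `ν` makes all bits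
i.i.d. with `P(bit = 1) = p`.  The trie on `n` strings uses strings `0,…,n-1`.
-/

open MeasureTheory ProbabilityTheory Real Filter

/-- The number of strings among the first `n` (encoded in `ω`) whose first `k` bits
form the word `r ∈ {0,1}^k`. -/
def prefCount (ω : ℕ → ℕ → Bool) (n k : ℕ) (r : Fin k → Bool) : ℕ :=
  ((Finset.range n).filter fun i => ∀ j : Fin k, ω i j = r j).card

/-- `X_k`: the number of words `r ∈ {0,1}^k` that are prefixes of at least two of the
first `n` strings. -/
def fillCount (ω : ℕ → ℕ → Bool) (n k : ℕ) : ℕ :=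
  (Finset.univ.filter fun r : Fin k → Bool => 2 ≤ prefCount ω n k r).card

/-- `X̄_k = X_k / 2^k`, the proportion of filled words at level `k`. -/
noncomputable def fracFilled (ω : ℕ → ℕ → Bool) (n k : ℕ) : ℝ :=
  (fillCount ω n k : ℝ) / 2 ^ k

/-- The α-fillup level `F_n(α) = max {k : X̄_k ≥ α}`. -/
noncomputable def fillupLevel (α : ℝ) (ω : ℕ → ℕ → Bool) (n : ℕ) : ℕ :=
  sSup {k | α ≤ fracFilled ω n k}

/-- `ν` is a probability measure on `ℕ → ℕ → Bool` under which all the bits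
`ω i j` are i.i.d. with `P(bit = 1) = p` (characterized by cylinder probabilities). -/
def IIDBits (p : ℝ) (ν : Measure (ℕ → ℕ → Bool)) : Prop :=
  IsProbabilityMeasure ν ∧
    ∀ (S : Finset (ℕ × ℕ)) (b : ℕ × ℕ → Bool),
      ν {ω | ∀ s ∈ S, ω s.1 s.2 = b s} =
        ∏ s ∈ S, ENNReal.ofReal (if b s then p else 1 - p)

/-- `W_k`: the number of indices `i ∈ {1, …, n}` (here `0, …, n-1`) such that `ξ_i`
agrees with the designated string `ξ_1` (index `0`) in its first `k` bits. -/
def Wcount (ω : ℕ → ℕ → Bool) (n k : ℕ) : ℕ :=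
  ((Finset.range n).filter fun i => ∀ j < k, ω i j = ω 0 j).card

/-!
Let `P` be the probability of the `k`-bit prefix of the first string. Since `log P` is a sum of `k`
i.i.d. bounded terms of mean `-h`, Hoeffding's inequality gives `|log P + k h| ≤ e log n` outside an
event of polynomially small probability. Given that prefix, the other strings agreeing with it form
a binomial sample of mean `(n - 1) P`, so Chebyshev's inequality puts `W_k` within a factor `4` of
`n P`. As `b h < 1`, a small `e` makes `n P` at least a positive power of `n`, so that the Chebyshev
bound is polynomially small as well.
-/

section IndependentFamilies

variable {Ω ι : Type*} {mΩ : MeasurableSpace Ω} {μ : Measure Ω}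

lemma iIndepFun_of_measure_biInter_preimage_singleton [IsProbabilityMeasure μ] {α : ι → Type*}
    [∀ i, Countable (α i)] [∀ i, MeasurableSpace (α i)]
    [∀ i, MeasurableSingletonClass (α i)] {X : ∀ i, Ω → α i}
    (hX : ∀ i, Measurable (X i))
    (h : ∀ (S : Finset ι) (x : ∀ i, α i),
      μ (⋂ i ∈ S, X i ⁻¹' {x i}) = ∏ i ∈ S, μ (X i ⁻¹' {x i})) :
    iIndepFun X μ := by
  let cyl : ι → Set (Set Ω) := fun i => Set.range fun x => X i ⁻¹' {x}
  have hpi : ∀ i, IsPiSystem (cyl i) := by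
    rintro i _ ⟨x, rfl⟩ _ ⟨y, rfl⟩ ⟨ω, rfl, hy⟩
    obtain rfl : X i ω = y := hy
    exact ⟨X i ω, (Set.inter_self _).symm⟩
  have hgen : ∀ i, MeasurableSpace.comap (X i) inferInstance =
      MeasurableSpace.generateFrom (cyl i) := by
    intro i
    refine le_antisymm ?_ (MeasurableSpace.generateFrom_le ?_)
    · rintro _ ⟨t, -, rfl⟩
      rw [← Set.biUnion_preimage_singleton]
      exact MeasurableSet.biUnion t.to_countable fun x _ =>
        MeasurableSpace.measurableSet_generateFrom ⟨x, rfl⟩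
    · rintro _ ⟨x, rfl⟩
      exact ⟨{x}, measurableSet_singleton x, rfl⟩
  have hcyl : iIndepSets cyl μ := by
    rw [iIndepSets_iff]
    intro S f hf
    have hx : ∀ i, ∃ x, i ∈ S → X i ⁻¹' {x} = f i := by
      intro i
      by_cases hi : i ∈ S
      · obtain ⟨x, hx⟩ := hf i hi
        exact ⟨x, fun _ => hx⟩
      · obtain ⟨ω⟩ : Nonempty Ω := nonempty_of_isProbabilityMeasure μ
        exact ⟨X i ω, fun h => absurd h hi⟩
    choose x hx using hx
    rw [← Set.iInter₂_congr hx, h S x]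
    exact Finset.prod_congr rfl fun i hi => by rw [hx i hi]
  exact iIndepSets.iIndep (fun i => (hX i).comap_le) cyl hpi hgen hcyl

lemma integral_comp_eq_sum_measureReal [IsFiniteMeasure μ] {α : Type*} [Fintype α]
    [MeasurableSpace α] [MeasurableSingletonClass α] {X : Ω → α} (hX : Measurable X)
    (f : α → ℝ) : ∫ ω, f (X ω) ∂μ = ∑ x, μ.real (X ⁻¹' {x}) * f x := by
  rw [← integral_map hX.aemeasurable (measurable_of_finite f).aestronglyMeasurable,
    integral_fintype .of_finite]
  simp only [map_measureReal_apply hX (measurableSet_singleton _), smul_eq_mul]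

lemma measureReal_le_abs_le_of_hasSubgaussianMGF {X : Ω → ℝ} {c : NNReal}
    (hX : HasSubgaussianMGF X c μ) {s : ℝ} (hs : 0 ≤ s) :
    μ.real {ω | s ≤ |X ω|} ≤ 2 * exp (-s ^ 2 / (2 * c)) := by
  have hcover : {ω | s ≤ |X ω|} = {ω | s ≤ X ω} ∪ {ω | s ≤ (-X) ω} := by
    ext ω
    simp [le_abs]
  calc μ.real {ω | s ≤ |X ω|} ≤ μ.real {ω | s ≤ X ω} + μ.real {ω | s ≤ (-X) ω} :=
        hcover ▸ measureReal_union_le _ _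
    _ ≤ exp (-s ^ 2 / (2 * c)) + exp (-s ^ 2 / (2 * c)) :=
        add_le_add (hX.measure_ge_le hs) (hX.neg.measure_ge_le hs)
    _ = 2 * exp (-s ^ 2 / (2 * c)) := (two_mul _).symm

lemma measureReal_le_abs_sum_le_of_iIndepFun {X : ι → Ω → ℝ}
    (hindep : iIndepFun X μ) (hX : ∀ i, Measurable (X i)) {M : ℝ} (hM : ∀ i ω, |X i ω| ≤ M)
    (hmean : ∀ i, ∫ ω, X i ω ∂μ = 0) (S : Finset ι) {s : ℝ} (hs : 0 ≤ s) :
    μ.real {ω | s ≤ |∑ i ∈ S, X i ω|} ≤ 2 * exp (-s ^ 2 / (2 * (S.card * M ^ 2))) := by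
  have := hindep.isProbabilityMeasure
  have hsub : ∀ i ∈ S, HasSubgaussianMGF (X i) ((‖M - -M‖₊ / 2) ^ 2) μ := fun i _ =>
    hasSubgaussianMGF_of_mem_Icc_of_integral_eq_zero (hX i).aemeasurable
      (.of_forall fun ω => abs_le.1 (hM i ω)) (hmean i)
  have hproxy : ((∑ _i ∈ S, (‖M - -M‖₊ / 2) ^ 2 : NNReal) : ℝ) = S.card * M ^ 2 := by
    simp [← two_mul]
  rw [← hproxy]
  exact measureReal_le_abs_le_of_hasSubgaussianMGF (.sum_of_iIndepFun hindep hsub) hs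

section Events

variable {E : ι → Set Ω} {P : ℝ}

lemma measureReal_le_abs_sum_indicator_sub_le (hE : ∀ i, MeasurableSet (E i))
    (hindep : iIndepSet E μ) (hP : ∀ i, μ.real (E i) = P) (S : Finset ι) {t : ℝ} (ht : 0 < t) :
    μ.real {ω | t ≤ |∑ i ∈ S, (E i).indicator 1 ω - S.card * P|} ≤ S.card * P / t ^ 2 := by
  have := hindep.isProbabilityMeasure
  let Y : ι → Ω → ℝ := fun i => (E i).indicator 1
  have hY2 : ∀ i, MemLp (Y i) 2 μ := fun i => (memLp_const 1).indicator (hE i)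
  have hmean : μ[∑ i ∈ S, Y i] = S.card * P := by
    simp only [Finset.sum_apply]
    rw [integral_finsetSum _ fun i _ => (hY2 i).integrable one_le_two]
    simp [Y, integral_indicator_one (hE _), hP]
  have hvar : ∀ i, Var[Y i; μ] ≤ P := by
    intro i
    have hsq : Y i ^ 2 = Y i := by
      ext ω
      by_cases h : ω ∈ E i <;> simp [Y, h]
    calc Var[Y i; μ] ≤ μ[Y i ^ 2] := variance_le_expectation_sq (hY2 i).1
      _ = P := by rw [hsq, integral_indicator_one (hE i), hP]
  have hvarsum : Var[∑ i ∈ S, Y i; μ] ≤ S.card * P := by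
    rw [IndepFun.variance_sum (fun i _ => hY2 i)
      fun i _ j _ hij => hindep.iIndepFun_indicator.indepFun hij]
    exact (Finset.sum_le_card_nsmul _ _ _ fun i _ => hvar i).trans_eq (nsmul_eq_mul _ _)
  have hcheb := meas_ge_le_variance_div_sq (memLp_finsetSum' S fun i _ => hY2 i) ht
  rw [hmean] at hcheb
  simp only [Finset.sum_apply] at hcheb
  have hreal := ENNReal.toReal_le_of_le_ofReal
    (div_nonneg (variance_nonneg _ _) (sq_nonneg t)) hcheb
  exact hreal.trans (by gcongr)

lemma measureReal_inter_le_abs_sum_indicator_sub_le (hE : ∀ i, MeasurableSet (E i))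
    (hindep : iIndepSet E μ) (hP : ∀ i, μ.real (E i) = P) {S : Finset ι} {i₀ : ι} (hi₀ : i₀ ∉ S)
    {t : ℝ} (ht : 0 < t) :
    μ.real (E i₀ ∩ {ω | t ≤ |∑ i ∈ S, (E i).indicator 1 ω - S.card * P|}) ≤
      P * (S.card * P / t ^ 2) := by
  let Y : ι → Ω → ℝ := fun i => (E i).indicator 1
  have hY : ∀ i, Measurable (Y i) := fun i => measurable_one.indicator (hE i)
  have hfirst : E i₀ = Y i₀ ⁻¹' {1} := by
    ext ω
    by_cases h : ω ∈ E i₀ <;> simp [Y, h]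
  have hcount : {ω | t ≤ |∑ i ∈ S, (E i).indicator 1 ω - S.card * P|} =
      (∑ i ∈ S, Y i) ⁻¹' {y | t ≤ |y - S.card * P|} := by
    ext ω
    simp [Y]
  have hprod : μ (E i₀ ∩ {ω | t ≤ |∑ i ∈ S, (E i).indicator 1 ω - S.card * P|}) =
      μ (E i₀) * μ {ω | t ≤ |∑ i ∈ S, (E i).indicator 1 ω - S.card * P|} := by
    rw [hcount, hfirst]
    exact (hindep.iIndepFun_indicator.indepFun_finsetSum_of_notMem hY hi₀).symm
      |>.measure_inter_preimage_eq_mul _ _ (measurableSet_singleton 1)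
        (measurableSet_le (by fun_prop) (by fun_prop))
  rw [measureReal_def, hprod, ENNReal.toReal_mul, ← measureReal_def, ← measureReal_def, hP i₀]
  exact mul_le_mul_of_nonneg_left
    (measureReal_le_abs_sum_indicator_sub_le hE hindep hP S ht) (hP i₀ ▸ measureReal_nonneg)

end Events

end IndependentFamilies

section Repetitions

lemma abs_logb_two_sub_logb_two_le {x y : ℝ} (hx : 0 < x) (hxy : x / 4 ≤ y) (hyx : y ≤ 4 * x) :
    |logb 2 y - logb 2 x| ≤ 2 := by
  have hy : 0 < y := by linarith
  have hlogb : logb 2 4 = 2 := by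
    rw [show (4 : ℝ) = 2 ^ (2 : ℝ) by norm_num, logb_rpow (by norm_num) (by norm_num)]
  have hlower := logb_le_logb_of_le one_lt_two (by positivity) hxy
  have hupper := logb_le_logb_of_le one_lt_two hy hyx
  rw [logb_div hx.ne' (by norm_num), hlogb] at hlower
  rw [logb_mul (by norm_num) hx.ne', hlogb] at hupper
  rw [abs_le]
  constructor <;> linarith

variable {Ω ι α : Type*} [DecidableEq α] {X : ι → Ω → α} {S : Finset ι} {i₀ : ι}

lemma card_filter_eq_sum_indicator_add_one [DecidableEq ι] (hi₀ : i₀ ∈ S) (ω : Ω) :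
    ((S.filter fun i => X i ω = X i₀ ω).card : ℝ) =
      ∑ i ∈ S.erase i₀, (X i ⁻¹' {X i₀ ω}).indicator 1 ω + 1 := by
  classical
  rw [Finset.card_filter, Nat.cast_sum, ← Finset.sum_erase_add S _ hi₀]
  simp only [Set.indicator_apply, Set.mem_preimage, Set.mem_singleton_iff, Pi.one_apply,
    Nat.cast_ite, Nat.cast_one, Nat.cast_zero, if_true]

lemma le_abs_sum_indicator_sub_of_two_lt_abs_logb [DecidableEq ι] {Q : ℝ} (hi₀ : i₀ ∈ S)
    (hS : 2 ≤ S.card) (hQ : 1 ≤ S.card * Q) {ω : Ω}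
    (h : 2 < |logb 2 (S.filter fun i => X i ω = X i₀ ω).card - logb 2 (S.card * Q)|) :
    (S.erase i₀).card * Q / 2 ≤
      |∑ i ∈ S.erase i₀, (X i ⁻¹' {X i₀ ω}).indicator 1 ω - (S.erase i₀).card * Q| := by
  contrapose! h
  have hS' : (2 : ℝ) ≤ S.card := by exact_mod_cast hS
  have hQ0 : 0 < Q := pos_of_mul_pos_right (zero_lt_one.trans_le hQ) (Nat.cast_nonneg _)
  have hcard : ((S.erase i₀).card : ℝ) = S.card - 1 := by
    rw [Finset.card_erase_of_mem hi₀, Nat.cast_pred (by lia)]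
  rw [hcard, abs_lt] at h
  rw [card_filter_eq_sum_indicator_add_one hi₀]
  refine abs_logb_two_sub_logb_two_le (by linarith) ?_ ?_ <;> nlinarith [h.1, h.2]

variable [MeasurableSpace Ω] {μ : Measure Ω} [MeasurableSpace α] [MeasurableSingletonClass α]

lemma measureReal_eq_and_two_lt_abs_logb_card_filter_le (hindep : iIndepFun X μ)
    (hX : ∀ i, Measurable (X i)) {x : α} {Q : ℝ} (hQ : ∀ i, μ.real (X i ⁻¹' {x}) = Q)
    (hi₀ : i₀ ∈ S) (hS : 2 ≤ S.card) (hSQ : 1 ≤ S.card * Q) :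
    μ.real {ω | X i₀ ω = x ∧
      2 < |logb 2 (S.filter fun i => X i ω = X i₀ ω).card - logb 2 (S.card * Q)|} ≤
      8 / S.card := by
  classical
  have := hindep.isProbabilityMeasure
  have hE : ∀ i, MeasurableSet (X i ⁻¹' {x}) := fun i => hX i (measurableSet_singleton x)
  have hindepE : iIndepSet (fun i => X i ⁻¹' {x}) μ :=
    (iIndepSet_iff_meas_biInter hE).2 fun T =>
      hindep.meas_biInter fun _ _ => ⟨{x}, measurableSet_singleton x, rfl⟩
  have hQ0 : 0 < Q := pos_of_mul_pos_right (zero_lt_one.trans_le hSQ) (Nat.cast_nonneg _)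
  have hS' : (2 : ℝ) ≤ S.card := by exact_mod_cast hS
  set m : ℝ := ((S.erase i₀).card : ℝ) with hm
  have hSm : (S.card : ℝ) / 2 ≤ m := by
    rw [hm, Finset.card_erase_of_mem hi₀, Nat.cast_pred (by lia)]
    linarith
  have hm0 : 0 < m := by linarith
  calc μ.real {ω | X i₀ ω = x ∧
        2 < |logb 2 (S.filter fun i => X i ω = X i₀ ω).card - logb 2 (S.card * Q)|}
      ≤ μ.real (X i₀ ⁻¹' {x} ∩ {ω | m * Q / 2 ≤
          |∑ i ∈ S.erase i₀, (X i ⁻¹' {x}).indicator 1 ω - m * Q|}) := by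
        refine measureReal_mono ?_
        rintro ω ⟨rfl, hω⟩
        exact ⟨rfl, le_abs_sum_indicator_sub_of_two_lt_abs_logb hi₀ hS hSQ hω⟩
    _ ≤ Q * (m * Q / (m * Q / 2) ^ 2) :=
        measureReal_inter_le_abs_sum_indicator_sub_le hE hindepE hQ (Finset.notMem_erase i₀ S)
          (by positivity)
    _ = 4 / m := by field
    _ ≤ 4 / (S.card / 2) := by gcongr
    _ = 8 / S.card := by ring

lemma measureReal_two_lt_abs_logb_card_filter_le [Finite α] {Q : α → ℝ} (hindep : iIndepFun X μ)
    (hX : ∀ i, Measurable (X i)) (hQ : ∀ i x, μ.real (X i ⁻¹' {x}) = Q x) (hi₀ : i₀ ∈ S)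
    (hS : 2 ≤ S.card) {θ : ℝ} (hθ : 1 ≤ θ) :
    μ.real {ω | θ ≤ S.card * Q (X i₀ ω) ∧
      2 < |logb 2 (S.filter fun i => X i ω = X i₀ ω).card - logb 2 (S.card * Q (X i₀ ω))|} ≤
      8 / θ := by
  have := hindep.isProbabilityMeasure
  cases nonempty_fintype α
  set A : Set Ω := {ω | θ ≤ S.card * Q (X i₀ ω) ∧
    2 < |logb 2 (S.filter fun i => X i ω = X i₀ ω).card - logb 2 (S.card * Q (X i₀ ω))|}
  have hQsum : ∑ x, Q x = 1 := by
    simpa [hQ] using sum_measureReal_preimage_singleton (μ := μ) Finset.univ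
      fun x _ => hX i₀ (measurableSet_singleton x)
  have hfiber : ∀ x, μ.real (X i₀ ⁻¹' {x} ∩ A) ≤ Q x * (8 / θ) := by
    intro x
    by_cases hx : θ ≤ S.card * Q x
    · calc μ.real (X i₀ ⁻¹' {x} ∩ A)
          ≤ μ.real {ω | X i₀ ω = x ∧
              2 < |logb 2 (S.filter fun i => X i ω = X i₀ ω).card - logb 2 (S.card * Q x)|} := by
            refine measureReal_mono ?_
            rintro ω ⟨rfl, -, hω⟩
            exact ⟨rfl, hω⟩
        _ ≤ 8 / S.card := measureReal_eq_and_two_lt_abs_logb_card_filter_le hindep hX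
            (fun i => hQ i x) hi₀ hS (hθ.trans hx)
        _ ≤ Q x * (8 / θ) := by
            rw [mul_div_assoc', div_le_div_iff₀ (by positivity) (by positivity)]
            linarith
    · have hempty : X i₀ ⁻¹' {x} ∩ A = ∅ := by
        refine Set.eq_empty_of_forall_notMem ?_
        rintro ω ⟨rfl, hω, -⟩
        exact hx hω
      rw [hempty, measureReal_empty, ← hQ i₀ x]
      positivity
  have hcover : A ⊆ ⋃ x, X i₀ ⁻¹' {x} ∩ A := fun ω hω => Set.mem_iUnion.2 ⟨X i₀ ω, rfl, hω⟩
  calc μ.real A ≤ ∑ x, μ.real (X i₀ ⁻¹' {x} ∩ A) :=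
        (measureReal_mono hcover).trans (measureReal_iUnion_fintype_le _)
    _ ≤ ∑ x, Q x * (8 / θ) := Finset.sum_le_sum fun x _ => hfiber x
    _ = 8 / θ := by rw [← Finset.sum_mul, hQsum, one_mul]

end Repetitions

section Bits

/-- The probability of the bit `c` under the Bernoulli law with `P(bit = 1) = p`. -/
def bitProb (p : ℝ) (c : Bool) : ℝ := if c then p else 1 - p

/-- The probability that the first `k` bits of a random string spell the word `r ∈ {0,1}^k`. -/
def wordProb (p : ℝ) {k : ℕ} (r : Fin k → Bool) : ℝ := ∏ j, bitProb p (r j)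

/-- The word formed by the first `k` bits of the `i`-th string of `ω`. -/
def stringPrefix (k i : ℕ) (ω : ℕ → ℕ → Bool) : Fin k → Bool := fun j => ω i j

lemma Wcount_eq_card_stringPrefix (ω : ℕ → ℕ → Bool) (n k : ℕ) :
    Wcount ω n k =
      ((Finset.range n).filter fun i => stringPrefix k i ω = stringPrefix k 0 ω).card := by
  simp only [Wcount, stringPrefix, funext_iff, Fin.forall_iff]

lemma measurable_bit (i j : ℕ) : Measurable fun ω : ℕ → ℕ → Bool => ω i j := by fun_prop

lemma measurable_stringPrefix (k i : ℕ) : Measurable (stringPrefix k i) :=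
  measurable_pi_lambda _ fun j => measurable_bit i j

variable {p : ℝ}

lemma bitProb_pos (hp : 0 < p) (hp1 : p < 1) (c : Bool) : 0 < bitProb p c := by
  cases c <;> simp [bitProb, hp, hp1]

lemma wordProb_pos (hp : 0 < p) (hp1 : p < 1) {k : ℕ} (r : Fin k → Bool) : 0 < wordProb p r :=
  Finset.prod_pos fun j _ => bitProb_pos hp hp1 (r j)

lemma logb_wordProb (hp : 0 < p) (hp1 : p < 1) {k : ℕ} (r : Fin k → Bool) :
    logb 2 (wordProb p r) = ∑ j, logb 2 (bitProb p (r j)) :=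
  logb_prod _ _ fun j _ => (bitProb_pos hp hp1 (r j)).ne'

variable {ν : Measure (ℕ → ℕ → Bool)}

lemma IIDBits.measure_biInter_preimage_bit (hν : IIDBits p ν) (S : Finset (ℕ × ℕ))
    (b : ℕ × ℕ → Bool) :
    ν (⋂ s ∈ S, (fun ω => ω s.1 s.2) ⁻¹' {b s}) = ∏ s ∈ S, ENNReal.ofReal (bitProb p (b s)) := by
  rw [show ⋂ s ∈ S, (fun ω : ℕ → ℕ → Bool => ω s.1 s.2) ⁻¹' {b s} =
    {ω | ∀ s ∈ S, ω s.1 s.2 = b s} by ext ω; simp]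
  exact hν.2 S b

lemma IIDBits.measure_preimage_bit (hν : IIDBits p ν) (s : ℕ × ℕ) (c : Bool) :
    ν ((fun ω => ω s.1 s.2) ⁻¹' {c}) = ENNReal.ofReal (bitProb p c) := by
  simpa using hν.measure_biInter_preimage_bit {s} fun _ => c

lemma IIDBits.iIndepFun_bit (hν : IIDBits p ν) :
    iIndepFun (fun (s : ℕ × ℕ) (ω : ℕ → ℕ → Bool) => ω s.1 s.2) ν := by
  have := hν.1
  refine iIndepFun_of_measure_biInter_preimage_singleton (fun s => measurable_bit s.1 s.2) ?_
  intro S b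
  simp only [hν.measure_biInter_preimage_bit, hν.measure_preimage_bit]

lemma IIDBits.measure_biInter_preimage_stringPrefix (hν : IIDBits p ν) {k : ℕ} (T : Finset ℕ)
    (r : ℕ → Fin k → Bool) :
    ν (⋂ i ∈ T, stringPrefix k i ⁻¹' {r i}) =
      ∏ i ∈ T, ∏ j, ENNReal.ofReal (bitProb p (r i j)) := by
  let S : Finset (ℕ × ℕ) := T ×ˢ Finset.range k
  let b : ℕ × ℕ → Bool := fun s => if h : s.2 < k then r s.1 ⟨s.2, h⟩ else false
  have hcyl : ⋂ i ∈ T, stringPrefix k i ⁻¹' {r i} =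
      ⋂ s ∈ S, (fun ω : ℕ → ℕ → Bool => ω s.1 s.2) ⁻¹' {b s} := by
    ext ω
    simp only [S, b, stringPrefix, Set.mem_iInter, Set.mem_preimage, Set.mem_singleton_iff,
      funext_iff, Fin.forall_iff, Prod.forall, Finset.mem_product, Finset.mem_range]
    refine ⟨fun h i j hij => ?_, fun h i hi j hj => ?_⟩
    · simpa [hij.2] using h i hij.1 j hij.2
    · simpa [hj] using h i j ⟨hi, hj⟩
  rw [hcyl, hν.measure_biInter_preimage_bit, Finset.prod_product]
  simp [b, Finset.prod_range]

lemma IIDBits.measure_preimage_stringPrefix (hν : IIDBits p ν) {k : ℕ} (i : ℕ)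
    (r : Fin k → Bool) :
    ν (stringPrefix k i ⁻¹' {r}) = ∏ j, ENNReal.ofReal (bitProb p (r j)) := by
  simpa using hν.measure_biInter_preimage_stringPrefix {i} fun _ => r

lemma IIDBits.iIndepFun_stringPrefix (hν : IIDBits p ν) (k : ℕ) :
    iIndepFun (stringPrefix k) ν := by
  have := hν.1
  refine iIndepFun_of_measure_biInter_preimage_singleton (measurable_stringPrefix k) ?_
  intro T r
  simp only [hν.measure_biInter_preimage_stringPrefix, hν.measure_preimage_stringPrefix]

lemma IIDBits.measureReal_preimage_stringPrefix (hν : IIDBits p ν) (hp : 0 < p) (hp1 : p < 1)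
    {k : ℕ} (i : ℕ) (r : Fin k → Bool) :
    ν.real (stringPrefix k i ⁻¹' {r}) = wordProb p r := by
  rw [measureReal_def, hν.measure_preimage_stringPrefix, ENNReal.toReal_prod]
  exact Finset.prod_congr rfl fun j _ => ENNReal.toReal_ofReal (bitProb_pos hp hp1 (r j)).le

lemma IIDBits.integral_comp_bit (hν : IIDBits p ν) (hp : 0 < p) (hp1 : p < 1) (i j : ℕ)
    (f : Bool → ℝ) : ∫ ω, f (ω i j) ∂ν = p * f true + (1 - p) * f false := by
  have := hν.1
  rw [integral_comp_eq_sum_measureReal (measurable_bit i j)]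
  simp only [measureReal_def, hν.measure_preimage_bit (i, j),
    ENNReal.toReal_ofReal (bitProb_pos hp hp1 _).le, Fintype.sum_bool]
  simp [bitProb]

lemma IIDBits.measureReal_two_lt_abs_logb_Wcount_le (hν : IIDBits p ν) (hp : 0 < p) (hp1 : p < 1)
    {n : ℕ} (hn : 2 ≤ n) (k : ℕ) {θ : ℝ} (hθ : 1 ≤ θ) :
    ν.real {ω | θ ≤ n * wordProb p (stringPrefix k 0 ω) ∧
      2 < |logb 2 (Wcount ω n k) - logb 2 (n * wordProb p (stringPrefix k 0 ω))|} ≤ 8 / θ := by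
  simpa only [Finset.card_range, ← Wcount_eq_card_stringPrefix] using
    measureReal_two_lt_abs_logb_card_filter_le (hν.iIndepFun_stringPrefix k)
      (measurable_stringPrefix k) (hν.measureReal_preimage_stringPrefix hp hp1)
      (S := Finset.range n) (i₀ := 0) (Finset.mem_range.2 (by lia)) (by simpa using hn) hθ

variable {h : ℝ}

lemma IIDBits.exists_measureReal_abs_logb_wordProb_le (hν : IIDBits p ν) (hp : 0 < p)
    (hp1 : p < 1) (hh : h = -(p * logb 2 p) - (1 - p) * logb 2 (1 - p)) :
    ∃ M > (0 : ℝ), ∀ (k : ℕ) (s : ℝ), 0 ≤ s →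
      ν.real {ω | s ≤ |logb 2 (wordProb p (stringPrefix k 0 ω)) + k * h|} ≤
        2 * exp (-s ^ 2 / (2 * (k * M ^ 2))) := by
  have := hν.1
  let f : Bool → ℝ := fun c => logb 2 (bitProb p c) + h
  let M : ℝ := |f true| + |f false| + 1
  have hfM : ∀ c, |f c| ≤ M := by
    rintro (_ | _) <;> linarith [abs_nonneg (f true), abs_nonneg (f false)]
  have hmean : ∀ j, ∫ ω, f (ω 0 j) ∂ν = 0 := by
    intro j
    rw [hν.integral_comp_bit hp hp1]
    simp only [f, bitProb, if_true, Bool.false_eq_true, if_false, hh]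
    ring
  have hindep : iIndepFun (fun (j : ℕ) (ω : ℕ → ℕ → Bool) => f (ω 0 j)) ν :=
    (hν.iIndepFun_bit.precomp (Prod.mk_right_injective 0)).comp _ fun _ => measurable_of_finite f
  have hsum : ∀ (k : ℕ) (ω : ℕ → ℕ → Bool), logb 2 (wordProb p (stringPrefix k 0 ω)) + k * h =
      ∑ j ∈ Finset.range k, f (ω 0 j) := by
    intro k ω
    rw [logb_wordProb hp hp1, Finset.sum_range]
    simp [f, stringPrefix, Finset.sum_add_distrib]
  refine ⟨M, by positivity, fun k s hs => ?_⟩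
  simp only [hsum]
  simpa only [Finset.card_range] using measureReal_le_abs_sum_le_of_iIndepFun hindep
    (fun j => (measurable_of_finite f).comp (measurable_bit 0 j)) (fun j ω => hfM _) hmean
    (Finset.range k) hs

lemma IIDBits.exists_measureReal_lt_abs_logb_wordProb_le_rpow (hν : IIDBits p ν) (hp : 0 < p)
    (hp1 : p < 1) (hh : h = -(p * logb 2 p) - (1 - p) * logb 2 (1 - p)) {b e : ℝ} (hb : 0 < b)
    (he : 0 < e) :
    ∃ γ > (0 : ℝ), ∀ n : ℕ, 2 ≤ n → ∀ k : ℕ, (k : ℝ) ≤ b * logb 2 n →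
      ν.real {ω | e * logb 2 n < |logb 2 (wordProb p (stringPrefix k 0 ω)) + k * h|} ≤
        2 * (n : ℝ) ^ (-γ) := by
  have := hν.1
  obtain ⟨M, hM, htail⟩ := hν.exists_measureReal_abs_logb_wordProb_le hp hp1 hh
  refine ⟨e ^ 2 / (2 * (b * M ^ 2) * log 2), by positivity, fun n hn k hk => ?_⟩
  have hn1 : (1 : ℝ) < n := by exact_mod_cast hn
  have hL : 0 < logb 2 n := logb_pos one_lt_two hn1
  rcases k.eq_zero_or_pos with rfl | hk0
  · have hempty : ∀ ω, ¬ e * logb 2 n <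
        |logb 2 (wordProb p (stringPrefix 0 0 ω)) + (0 : ℕ) * h| := by
      intro ω
      simpa [wordProb] using (mul_pos he hL).le
    simp only [hempty, Set.ofPred_false, measureReal_empty]
    positivity
  · calc ν.real {ω | e * logb 2 n < |logb 2 (wordProb p (stringPrefix k 0 ω)) + k * h|}
        ≤ ν.real {ω | e * logb 2 n ≤ |logb 2 (wordProb p (stringPrefix k 0 ω)) + k * h|} :=
          measureReal_mono (Set.ofPred_subset_ofPred.2 fun _ => le_of_lt)
      _ ≤ 2 * exp (-(e * logb 2 n) ^ 2 / (2 * (k * M ^ 2))) := htail k _ (by positivity)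
      _ ≤ 2 * exp (-(e * logb 2 n) ^ 2 / (2 * (b * logb 2 n * M ^ 2))) := by
          simp only [neg_div]
          gcongr
      _ = 2 * (n : ℝ) ^ (-(e ^ 2 / (2 * (b * M ^ 2) * log 2))) := by
          rw [rpow_def_of_pos (by positivity), logb]
          have hlogn : 0 < log n := log_pos hn1
          congr 2
          field

end Bits

lemma one_le_rpow_mul_rpow_neg {x y δ : ℝ} (hx : 0 < x) (hxy : x ≤ y) (hδ : 0 ≤ δ) :
    1 ≤ y ^ δ * x ^ (-δ) := by
  rw [rpow_neg hx.le, ← div_eq_mul_inv, one_le_div (rpow_pos_of_pos hx δ)]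
  exact rpow_le_rpow hx.le hxy hδ

lemma setOf_lt_abs_logb_Wcount_subset {p : ℝ} (hp : 0 < p) (hp1 : p < 1) {h ε e c : ℝ} {n k : ℕ}
    (hn : 0 < n) (he : e * logb 2 n + 2 ≤ ε * logb 2 n)
    (hk : k * h + e * logb 2 n + c * logb 2 n ≤ logb 2 n) :
    {ω | ε * logb 2 n < |logb 2 (Wcount ω n k) - logb 2 n + k * h|} ⊆
      {ω | e * logb 2 n < |logb 2 (wordProb p (stringPrefix k 0 ω)) + k * h|} ∪
        {ω | (n : ℝ) ^ c ≤ n * wordProb p (stringPrefix k 0 ω) ∧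
          2 < |logb 2 (Wcount ω n k) - logb 2 (n * wordProb p (stringPrefix k 0 ω))|} := by
  intro ω hω
  refine or_iff_not_imp_left.2 fun htyp => ?_
  rw [Set.mem_ofPred_eq] at hω
  rw [Set.mem_ofPred_eq, not_lt, abs_le] at htyp
  have hn0 : (0 : ℝ) < n := by exact_mod_cast hn
  have hP := wordProb_pos hp hp1 (stringPrefix k 0 ω)
  set P := wordProb p (stringPrefix k 0 ω)
  have hlog : logb 2 (n * P) = logb 2 n + logb 2 P := logb_mul hn0.ne' hP.ne'
  constructor
  · rw [← logb_le_logb one_lt_two (by positivity) (by positivity), hlog,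
      logb_rpow_eq_mul_logb_of_pos hn0]
    linarith [htyp.1]
  · rw [hlog]
    rw [lt_abs] at hω ⊢
    rcases hω with hω | hω
    · left
      linarith [htyp.2]
    · right
      linarith [htyp.1]

lemma IIDBits.measureReal_lt_abs_logb_Wcount_le {p : ℝ} {ν : Measure (ℕ → ℕ → Bool)}
    (hν : IIDBits p ν) (hp : 0 < p) (hp1 : p < 1) {h ε e c γ : ℝ} {n k : ℕ} (hn : 2 ≤ n)
    (hc : 0 ≤ c) (he : e * logb 2 n + 2 ≤ ε * logb 2 n)
    (hk : k * h + e * logb 2 n + c * logb 2 n ≤ logb 2 n)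
    (htail : ν.real {ω | e * logb 2 n < |logb 2 (wordProb p (stringPrefix k 0 ω)) + k * h|} ≤
      2 * (n : ℝ) ^ (-γ)) :
    ν.real {ω | ε * logb 2 n < |logb 2 (Wcount ω n k) - logb 2 n + k * h|} ≤
      10 * (n : ℝ) ^ (-min γ c) := by
  have := hν.1
  have hn1 : (1 : ℝ) ≤ n := by exact_mod_cast one_le_two.trans hn
  have hcount := hν.measureReal_two_lt_abs_logb_Wcount_le hp hp1 hn k (one_le_rpow hn1 hc)
  rw [div_eq_mul_inv, ← rpow_neg (by positivity)] at hcount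
  have hγ : (n : ℝ) ^ (-γ) ≤ (n : ℝ) ^ (-min γ c) :=
    rpow_le_rpow_of_exponent_le hn1 (neg_le_neg (min_le_left γ c))
  have hc' : (n : ℝ) ^ (-c) ≤ (n : ℝ) ^ (-min γ c) :=
    rpow_le_rpow_of_exponent_le hn1 (neg_le_neg (min_le_right γ c))
  have hunion := (measureReal_mono (μ := ν)
    (setOf_lt_abs_logb_Wcount_subset hp hp1 (by lia) he hk)).trans (measureReal_union_le _ _)
  linarith

theorem Wcount_concentration_general
    (p q b ε : ℝ) (hp : 0 < p) (hp1 : p < 1) (hq : q = 1 - p)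
    (h : ℝ) (hh : h = -(p * logb 2 p) - q * logb 2 q)
    (hb0 : 0 < b) (hb : b < 1 / h) (hε : 0 < ε)
    (ν : Measure (ℕ → ℕ → Bool)) (hν : IIDBits p ν) :
    ∃ C > (0 : ℝ), ∃ δ > (0 : ℝ), ∀ n : ℕ, 2 ≤ n → ∀ k : ℕ, (k : ℝ) ≤ b * logb 2 n →
      ν {ω | ε * logb 2 n < |logb 2 (Wcount ω n k) - logb 2 n + (k : ℝ) * h|} ≤
        ENNReal.ofReal (C * (n : ℝ) ^ (-δ)) := by
  subst hq
  have hh0 : 0 < h := one_div_pos.1 (hb0.trans hb)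
  have hbh : b * h < 1 := (lt_div_iff₀ hh0).1 hb
  let c := (1 - b * h) / 2
  have hc : 0 < c := half_pos (sub_pos.2 hbh)
  let e := min (ε / 2) c
  have he : 0 < e := lt_min (half_pos hε) hc
  obtain ⟨γ, hγ, htail⟩ :=
    hν.exists_measureReal_lt_abs_logb_wordProb_le_rpow hp hp1 hh hb0 he
  let δ := min γ c
  have hδ : 0 < δ := lt_min hγ hc
  refine ⟨10 + (2 ^ (4 / ε)) ^ δ, by positivity, δ, hδ, fun n hn k hk => ?_⟩
  have := hν.1
  have hn0 : (0 : ℝ) < n := by positivity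
  rw [← ofReal_measureReal, add_mul]
  refine ENNReal.ofReal_le_ofReal ?_
  rcases le_or_gt (n : ℝ) (2 ^ (4 / ε)) with hsmall | hlarge
  · have hone := one_le_rpow_mul_rpow_neg hn0 hsmall hδ.le
    exact measureReal_le_one.trans (hone.trans (le_add_of_nonneg_left (by positivity)))
  · rw [← lt_logb_iff_rpow_lt one_lt_two hn0, div_lt_iff₀' hε] at hlarge
    have hL : 0 < logb 2 n := logb_pos one_lt_two (by exact_mod_cast hn)
    have heε : e * logb 2 n ≤ ε / 2 * logb 2 n := by gcongr; exact min_le_left _ _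
    have hec : e * logb 2 n ≤ c * logb 2 n := by gcongr; exact min_le_right _ _
    have hkh : k * h ≤ b * logb 2 n * h := by gcongr
    refine (hν.measureReal_lt_abs_logb_Wcount_le hp hp1 hn hc.le ?_ ?_ (htail n hn k hk)).trans
      (le_add_of_nonneg_right (by positivity))
    · linarith
    · grind

/-- Lemma C of Janson–Szpankowski: for `0 < a < b < 1/h` and `ε > 0`, uniformly for
`a log n ≤ k ≤ b log n`, `P(|log W_k - log n + k h| > ε log n) = O(n^{-Θ(1)})`. -/
theorem Wcount_concentration
    (p q a b ε : ℝ) (hp : 0 < p) (hp1 : p < 1) (hq : q = 1 - p)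
    (h : ℝ) (hh : h = -(p * Real.logb 2 p) - q * Real.logb 2 q)
    (ha : 0 < a) (hab : a < b) (hb : b < 1 / h) (hε : 0 < ε)
    (ν : Measure (ℕ → ℕ → Bool)) (hν : IIDBits p ν) :
    ∃ C > (0 : ℝ), ∃ δ > (0 : ℝ), ∀ n : ℕ, 2 ≤ n → ∀ k : ℕ,
      a * Real.logb 2 n ≤ (k : ℝ) → (k : ℝ) ≤ b * Real.logb 2 n →
        ν {ω | ε * Real.logb 2 n <
            |Real.logb 2 (Wcount ω n k) - Real.logb 2 n + (k : ℝ) * h|} ≤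
          ENNReal.ofReal (C * (n : ℝ) ^ (-δ)) := by
  obtain ⟨C, hC, δ, hδ, hbound⟩ :=
    Wcount_concentration_general p q b ε hp hp1 hq h hh (ha.trans hab) hb hε ν hν
  exact ⟨C, hC, δ, hδ, fun n hn k _ hk => hbound n hn k hk⟩
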